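/- arXiv:1502.03085 — 9 statements merged into one kernel-verified Lean document; each statement's English description precedes it below -/
import Mathlib

section
/- For every positive integer m and every real number x, the polynomial P_m(x) = Σ_{k=0}^{m} ((2m+1)/(2k+1))·binom(m+k,2k)·x^k factors as P_m(x) = ∏_{k=1}^{m} (x + 2 − 2·cos(2πk/(2m+1))), and the polynomial Q_m(x) = 2 + Σ_{k=1}^{m} (m/k)·binom(m+k−1,2k−1)·x^k factors as Q_m(x) = ∏_{k=1}^{m} (x + 2 − 2·cos((2k−1)π/(2m))). In particular all roots of P_m and of Q_m are real, simple, and lie in the interval [−4, 0). -/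
open Polynomial Finset Real

/-- `P_m(x) = Σ_{k=0}^{m} ((2m+1)/(2k+1))·binom(m+k,2k)·x^k` as a real polynomial. -/
noncomputable def Ppoly (m : ℕ) : Polynomial ℝ :=
  ∑ k ∈ Finset.range (m + 1),
    Polynomial.C ((2 * m + 1 : ℝ) / (2 * k + 1) * (Nat.choose (m + k) (2 * k))) * Polynomial.X ^ k

/-- `Q_m(x) = 2 + Σ_{k=1}^{m} (m/k)·binom(m+k−1,2k−1)·x^k` as a real polynomial. -/
noncomputable def Qpoly (m : ℕ) : Polynomial ℝ :=
  Polynomial.C 2 + ∑ k ∈ Finset.Icc 1 m,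
    Polynomial.C ((m : ℝ) / k * (Nat.choose (m + k - 1) (2 * k - 1))) * Polynomial.X ^ k

lemma P_coeff_aux (m k : ℕ) :
    (2 * m + 1 : ℝ) / (2 * k + 1) * (Nat.choose (m + k) (2 * k)) =
      (Nat.choose (m + k) (2 * k) : ℝ) + 2 * (Nat.choose (m + k) (2 * k + 1)) := by
  have hk : (2 * k + 1 : ℝ) ≠ 0 := by positivity
  have key : (Nat.choose (m + k) (2 * k + 1) : ℝ) * (2 * k + 1) =
      (Nat.choose (m + k) (2 * k)) * ((m : ℝ) - k) := by
    rcases le_or_gt k m with h | h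
    · have := Nat.choose_succ_right_eq (m + k) (2 * k)
      have h2 : m + k - 2 * k = m - k := by omega
      rw [h2] at this
      have h3 := congrArg (Nat.cast : ℕ → ℝ) this
      push_cast [Nat.cast_sub h] at h3
      linarith
    · rw [Nat.choose_eq_zero_of_lt (by omega), Nat.choose_eq_zero_of_lt (by omega)]
      simp
  field_simp
  linarith

lemma P_coeff (m k : ℕ) : (Ppoly m).coeff k =
      (Nat.choose (m + k) (2 * k) : ℝ) + 2 * (Nat.choose (m + k) (2 * k + 1)) := by
  unfold Ppoly
  simp only [P_coeff_aux]
  rw [finset_sum_coeff]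
  simp only [coeff_C_mul_X_pow]
  rw [Finset.sum_ite_eq]
  split_ifs with h
  · rfl
  · simp only [Finset.mem_range] at h
    rw [Nat.choose_eq_zero_of_lt (by omega), Nat.choose_eq_zero_of_lt (by omega)]
    simp

lemma Q_coeff_aux (m k : ℕ) (hk : 1 ≤ k) (hkm : k ≤ m) :
    (m : ℝ) / k * (Nat.choose (m + k - 1) (2 * k - 1)) =
      (Nat.choose (m + k) (2 * k) : ℝ) + (Nat.choose (m + k - 1) (2 * k)) := by
  obtain ⟨j, rfl⟩ : ∃ j, k = j + 1 := ⟨k - 1, by omega⟩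
  obtain ⟨d, rfl⟩ : ∃ d, m = j + 1 + d := ⟨m - (j + 1), by omega⟩
  have e1 : j + 1 + d + (j + 1) - 1 = 2 * j + 1 + d := by omega
  have e2 : j + 1 + d + (j + 1) = 2 * j + 1 + d + 1 := by omega
  have e3 : 2 * (j + 1) - 1 = 2 * j + 1 := by omega
  have e4 : 2 * (j + 1) = 2 * j + 1 + 1 := by omega
  rw [e1, e2, e3, e4, Nat.choose_succ_succ]
  have := Nat.choose_succ_right_eq (2 * j + 1 + d) (2 * j + 1)
  rw [Nat.add_sub_cancel_left] at this
  have h3 := congrArg (Nat.cast : ℕ → ℝ) this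
  push_cast at h3 ⊢
  have hk : (j + 1 : ℝ) ≠ 0 := by positivity
  field_simp
  linarith

lemma Q_coeff (m k : ℕ) : (Qpoly m).coeff k =
      (Nat.choose (m + k) (2 * k) : ℝ) + (Nat.choose (m + k - 1) (2 * k)) := by
  unfold Qpoly
  rw [coeff_add, finset_sum_coeff]
  simp only [coeff_C_mul_X_pow]
  rw [Finset.sum_ite_eq]
  rcases Nat.eq_zero_or_pos k with rfl | hk
  · simp; norm_num
  · rw [coeff_C_ne_zero (by omega)]
    split_ifs with h
    · simp only [Finset.mem_Icc] at h
      rw [Q_coeff_aux m k h.1 h.2, zero_add]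
    · simp only [Finset.mem_Icc] at h
      rw [Nat.choose_eq_zero_of_lt (by omega), Nat.choose_eq_zero_of_lt (by omega)]
      simp

lemma choose_rec (N j : ℕ) : (Nat.choose (N + 2) (j + 2) : ℝ) =
    Nat.choose N j + 2 * Nat.choose (N + 1) (j + 2) - Nat.choose N (j + 2) := by
  simp only [Nat.choose_succ_succ, Nat.cast_add, Nat.succ_eq_add_one]
  ring

lemma P_rec (m : ℕ) : Ppoly (m + 2) = (X + 2) * Ppoly (m + 1) - Ppoly m := by
  ext k
  rw [add_mul, coeff_sub, coeff_add, show (2 : ℝ[X]) = C 2 from rfl, coeff_C_mul]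
  cases k with
  | zero => simp only [coeff_X_mul_zero, P_coeff]; simp; ring
  | succ k =>
    rw [coeff_X_mul]
    simp only [P_coeff]
    have h1 := choose_rec (m + k + 1) (2 * k)
    have h2 := choose_rec (m + k + 1) (2 * k + 1)
    have e1 : m + 2 + (k + 1) = m + k + 1 + 2 := by ring
    have e2 : m + 1 + k = m + k + 1 := by ring
    have e3 : m + 1 + (k + 1) = m + k + 1 + 1 := by ring
    have e4 : m + (k + 1) = m + k + 1 := by ring
    have e5 : 2 * (k + 1) = 2 * k + 2 := by ring
    have e6 : 2 * k + 2 + 1 = 2 * k + 1 + 2 := by ring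
    rw [e1, e2, e3, e4, e5, e6]
    linarith

lemma Q_rec (m : ℕ) : Qpoly (m + 2) = (X + 2) * Qpoly (m + 1) - Qpoly m := by
  ext k
  rw [add_mul, coeff_sub, coeff_add, show (2 : ℝ[X]) = C 2 from rfl, coeff_C_mul]
  cases k with
  | zero => simp only [coeff_X_mul_zero, Q_coeff]; simp; ring
  | succ k =>
    rw [coeff_X_mul]
    simp only [Q_coeff]
    have h1 := choose_rec (m + k + 1) (2 * k)
    have h2 := choose_rec (m + k) (2 * k)
    have e1 : m + 2 + (k + 1) = m + k + 1 + 2 := by ring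
    have e2 : m + 1 + k = m + k + 1 := by ring
    have e3 : m + 1 + (k + 1) = m + k + 1 + 1 := by ring
    have e4 : m + (k + 1) = m + k + 1 := by ring
    have e5 : 2 * (k + 1) = 2 * k + 2 := by ring
    have f1 : m + k + 1 + 2 - 1 = m + k + 2 := by omega
    rw [e1, e2, e3, e4, e5, f1, Nat.add_sub_cancel, Nat.add_sub_cancel]
    linarith

lemma P_eval_cos (t : ℝ) (m : ℕ) :
    (Ppoly m).eval (2 * cos (2 * t) - 2) * sin t = sin ((2 * m + 1) * t) := by
  induction m using Nat.twoStepInduction with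
  | zero => simp [Ppoly]
  | one =>
    simp only [Ppoly, Finset.sum_range_succ, Finset.sum_range_zero]
    simp
    rw [show (2 + 1) * t = 3 * t by ring, Real.sin_three_mul, Real.cos_two_mul, Real.cos_sq']
    norm_num
    ring
  | more n h1 h2 =>
    rw [P_rec, eval_sub, eval_mul, eval_add, eval_X, eval_ofNat, sub_mul, h1]
    have : (2 * cos (2 * t) - 2 + 2) * eval (2 * cos (2 * t) - 2) (Ppoly (n + 1)) * sin t
      = 2 * cos (2 * t) * sin ((2 * ((n + 1 : ℕ) : ℝ) + 1) * t) := by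
      rw [← h2]; ring
    rw [this]
    push_cast
    have a1 : (2 * ((n : ℝ) + 2) + 1) * t = (2 * ((n : ℝ) + 1) + 1) * t + 2 * t := by ring
    have a2 : (2 * (n : ℝ) + 1) * t = (2 * ((n : ℝ) + 1) + 1) * t - 2 * t := by ring
    rw [a1, a2, sin_add, sin_sub]
    ring

lemma Q_eval_cos (t : ℝ) (m : ℕ) :
    (Qpoly m).eval (2 * cos t - 2) = 2 * cos (m * t) := by
  induction m using Nat.twoStepInduction with
  | zero => simp [Qpoly]
  | one => simp [Qpoly]
  | more n h1 h2 =>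
    rw [Q_rec, eval_sub, eval_mul, eval_add, eval_X, eval_ofNat, h1, h2]
    push_cast
    have a1 : ((n : ℝ) + 2) * t = ((n : ℝ) + 1) * t + t := by ring
    have a2 : (n : ℝ) * t = ((n : ℝ) + 1) * t - t := by ring
    rw [a1, a2, cos_add, cos_sub]
    ring

lemma factor_of_roots (p : ℝ[X]) (m : ℕ) (hc : p.coeff m = 1) (hz : ∀ k, m < k → p.coeff k = 0)
    (a : ℕ → ℝ) (ha : Set.InjOn a (Finset.Icc 1 m)) (hr : ∀ k ∈ Finset.Icc 1 m, p.eval (a k) = 0) :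
    p = ∏ k ∈ Finset.Icc 1 m, (X - C (a k)) := by
  have hle : p.natDegree ≤ m := natDegree_le_iff_coeff_eq_zero.2 hz
  have hmon : p.Monic := monic_of_natDegree_le_of_coeff_eq_one m hle hc
  have hdeg : p.natDegree = m := natDegree_eq_of_le_of_coeff_ne_zero hle (by rw [hc]; exact one_ne_zero)
  have hmon2 : (∏ k ∈ Finset.Icc 1 m, (X - C (a k))).Monic :=
    monic_prod_of_monic _ _ fun k _ => monic_X_sub_C _
  have hdvd : (∏ k ∈ Finset.Icc 1 m, (X - C (a k))) ∣ p := by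
    apply Finset.prod_dvd_of_coprime
    · intro i hi j hj hij
      exact isCoprime_X_sub_C_of_isUnit_sub
        (sub_ne_zero.2 (fun h => hij (ha hi hj h))).isUnit
    · intro k hk
      exact dvd_iff_isRoot.2 (hr k hk)
  refine (eq_of_monic_of_dvd_of_natDegree_le hmon2 hmon hdvd ?_)
  rw [hdeg, natDegree_finset_prod_X_sub_C_eq_card]
  simp

lemma concl (p : ℝ[X]) (m : ℕ) (hc : p.coeff m = 1) (hz : ∀ k, m < k → p.coeff k = 0)
    (t : ℕ → ℝ) (ht : ∀ k ∈ Finset.Icc 1 m, 0 < t k ∧ t k ≤ π)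
    (hinj : Set.InjOn t (Finset.Icc 1 m))
    (hr : ∀ k ∈ Finset.Icc 1 m, p.eval (2 * cos (t k) - 2) = 0) :
    (∀ x : ℝ, p.eval x = ∏ k ∈ Finset.Icc 1 m, (x + 2 - 2 * cos (t k))) ∧
    (∀ z : ℂ, (p.map (algebraMap ℝ ℂ)).IsRoot z → ∃ x : ℝ, (x : ℂ) = z) ∧
    (∀ x : ℝ, p.IsRoot x → x ∈ Set.Ico (-4 : ℝ) 0 ∧ p.rootMultiplicity x = 1) := by
  have ha : Set.InjOn (fun k => 2 * cos (t k) - 2) (Finset.Icc 1 m) := by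
    intro i hi j hj hij
    apply hinj hi hj
    have h1 := ht i hi
    have h2 := ht j hj
    apply Real.injOn_cos ⟨h1.1.le, h1.2⟩ ⟨h2.1.le, h2.2⟩
    simp only at hij
    linarith
  have hp := factor_of_roots p m hc hz _ ha hr
  refine ⟨?_, ?_, ?_⟩
  · intro x
    rw [hp, eval_prod]
    refine Finset.prod_congr rfl fun k _ => ?_
    simp
    ring
  · intro z h
    rw [hp, Polynomial.map_prod, IsRoot, eval_prod, Finset.prod_eq_zero_iff] at h
    obtain ⟨k, _, hk⟩ := h
    refine ⟨2 * cos (t k) - 2, ?_⟩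
    rw [Polynomial.map_sub, map_X, map_C, eval_sub, eval_X, eval_C, sub_eq_zero] at hk
    rw [hk]; rfl
  · intro x h
    have hsep : p.Separable := by
      rw [hp]
      exact (separable_prod_X_sub_C_iff').2 ha
    have hmul : p.rootMultiplicity x = 1 := by
      apply le_antisymm (rootMultiplicity_le_one_of_separable hsep x)
      exact (rootMultiplicity_pos hsep.ne_zero).2 h
    refine ⟨?_, hmul⟩
    rw [hp, IsRoot, eval_prod, Finset.prod_eq_zero_iff] at h
    obtain ⟨k, hk, hx⟩ := h
    simp only [eval_sub, eval_X, eval_C] at hx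
    have h1 := ht k hk
    have h2 := Real.neg_one_le_cos (t k)
    have h3 : cos (t k) < 1 := by
      rw [← Real.cos_zero]
      exact Real.cos_lt_cos_of_nonneg_of_le_pi le_rfl h1.2 h1.1
    constructor <;> linarith

theorem stmt_0 (m : ℕ) (hm : 0 < m) :
    (∀ x : ℝ, (Ppoly m).eval x =
      ∏ k ∈ Finset.Icc 1 m, (x + 2 - 2 * Real.cos (2 * Real.pi * k / (2 * m + 1)))) ∧
    (∀ x : ℝ, (Qpoly m).eval x =
      ∏ k ∈ Finset.Icc 1 m, (x + 2 - 2 * Real.cos ((2 * k - 1) * Real.pi / (2 * m)))) ∧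
    (∀ z : ℂ, ((Ppoly m).map (algebraMap ℝ ℂ)).IsRoot z → ∃ x : ℝ, (x : ℂ) = z) ∧
    (∀ z : ℂ, ((Qpoly m).map (algebraMap ℝ ℂ)).IsRoot z → ∃ x : ℝ, (x : ℂ) = z) ∧
    (∀ x : ℝ, (Ppoly m).IsRoot x →
      x ∈ Set.Ico (-4 : ℝ) 0 ∧ (Ppoly m).rootMultiplicity x = 1) ∧
    (∀ x : ℝ, (Qpoly m).IsRoot x →
      x ∈ Set.Ico (-4 : ℝ) 0 ∧ (Qpoly m).rootMultiplicity x = 1) := by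
  have hm' : (0 : ℝ) < m := by exact_mod_cast hm
  have hpi := Real.pi_pos
  have hP := concl (Ppoly m) m
    (by rw [P_coeff, ← two_mul, Nat.choose_self, Nat.choose_succ_self]; simp)
    (by
      intro k hk
      rw [P_coeff, Nat.choose_eq_zero_of_lt (by omega), Nat.choose_eq_zero_of_lt (by omega)]
      simp)
    (fun k => 2 * Real.pi * k / (2 * m + 1))
    (by
      intro k hk
      rw [Finset.mem_Icc] at hk
      have h1 : (1 : ℝ) ≤ k := by exact_mod_cast hk.1
      have h2 : (k : ℝ) ≤ m := by exact_mod_cast hk.2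
      refine ⟨by positivity, ?_⟩
      rw [div_le_iff₀ (by positivity)]
      nlinarith)
    (by
      intro i _ j _ hij
      simp only at hij
      field_simp at hij
      exact_mod_cast hij)
    (by
      intro k hk
      rw [Finset.mem_Icc] at hk
      have h1 : (1 : ℝ) ≤ k := by exact_mod_cast hk.1
      have h2 : (k : ℝ) ≤ m := by exact_mod_cast hk.2
      have h := P_eval_cos (Real.pi * k / (2 * m + 1)) m
      have e : (2 * (m : ℝ) + 1) * (Real.pi * k / (2 * m + 1)) = k * Real.pi := by
        field_simp
      rw [e, Real.sin_nat_mul_pi] at h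
      have hs : 0 < Real.sin (Real.pi * k / (2 * m + 1)) := by
        apply Real.sin_pos_of_pos_of_lt_pi (by positivity)
        rw [div_lt_iff₀ (by positivity)]
        nlinarith
      have h4 := (mul_eq_zero.1 h).resolve_right hs.ne'
      rw [← h4]
      congr 4
      ring)
  have hQ := concl (Qpoly m) m
    (by
      rw [Q_coeff, ← two_mul, Nat.choose_self, Nat.choose_eq_zero_of_lt (by omega)]; simp)
    (by
      intro k hk
      rw [Q_coeff, Nat.choose_eq_zero_of_lt (by omega), Nat.choose_eq_zero_of_lt (by omega)]
      simp)
    (fun k => (2 * k - 1) * Real.pi / (2 * m))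
    (by
      intro k hk
      rw [Finset.mem_Icc] at hk
      have h1 : (1 : ℝ) ≤ k := by exact_mod_cast hk.1
      have h2 : (k : ℝ) ≤ m := by exact_mod_cast hk.2
      have h3 : (0 : ℝ) < 2 * k - 1 := by linarith
      refine ⟨by positivity, ?_⟩
      rw [div_le_iff₀ (by positivity)]
      nlinarith)
    (by
      intro i _ j _ hij
      simp only at hij
      field_simp at hij
      have : (i : ℝ) = j := by linarith
      exact_mod_cast this)
    (by
      intro k hk
      rw [Q_eval_cos]
      have e : (m : ℝ) * ((2 * k - 1) * Real.pi / (2 * m)) = k * Real.pi - Real.pi / 2 := by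
        field_simp
      rw [e, Real.cos_sub_pi_div_two, Real.sin_nat_mul_pi, mul_zero])
  exact ⟨hP.1, hQ.1, hP.2.1, hQ.2.1, hP.2.2, hQ.2.2⟩
end

section
/- Let f, g be the sequences with f(1) = 2, f(2) = −1, g(1) = 1, g(2) = −1 and f(r+2) = −f(r+1) − f(r)/5, g(r+2) = −g(r+1) − g(r)/5 for r ≥ 1, and let φ = (1+√5)/2. Then for every r ≥ 1, |f(r+1)/f(r) + φ/√5| = 1/(√5·(φ^{2r−2} + 1)) and |g(r+1)/g(r) + φ/√5| = 1/(√5·(φ^{2r} − 1)); in particular both sequences of consecutive ratios converge to −φ/√5. -/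
open Real Filter

/-- The interlacing sequence `𝓕_r^{(2,1)}`: `f 1 = 2`, `f 2 = −1`,
`f (r+2) = −f (r+1) − f r / 5` for `r ≥ 1`. (The value at `0` is junk.) -/
def fseq : ℕ → ℚ
  | 0 => 0
  | 1 => 2
  | 2 => -1
  | n + 3 => -fseq (n + 2) - fseq (n + 1) / 5

/-- The interlacing sequence `𝓕_r^{(2,2)}`: `g 1 = 1`, `g 2 = −1`,
`g (r+2) = −g (r+1) − g r / 5` for `r ≥ 1`. (The value at `0` is junk.) -/
def gseq : ℕ → ℚ
  | 0 => 0
  | 1 => 1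
  | 2 => -1
  | n + 3 => -gseq (n + 2) - gseq (n + 1) / 5

/-- The Golden Ratio `φ = (1+√5)/2`. -/
noncomputable def goldenφ : ℝ := (1 + Real.sqrt 5) / 2

lemma aux_rec_root (a : ℝ) (ha : a ^ 2 = -a - 1 / 5) (n : ℕ) :
    a ^ (n + 2) = -a ^ (n + 1) - a ^ n / 5 := by
  linear_combination a ^ n * ha

lemma aux_sq : Real.sqrt 5 ^ 2 = 5 := Real.sq_sqrt (by norm_num)

lemma aux_s_pos : 0 < Real.sqrt 5 := Real.sqrt_pos.mpr (by norm_num)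

lemma aux_f (a b : ℝ) (ha : a ^ 2 = -a - 1 / 5) (hb : b ^ 2 = -b - 1 / 5) (hab : a + b = -1)
    (n : ℕ) : (fseq (n + 1) : ℝ) = a ^ n + b ^ n ∧
      (fseq (n + 2) : ℝ) = a ^ (n + 1) + b ^ (n + 1) := by
  induction n with
  | zero =>
    constructor
    · norm_num [fseq]
    · norm_num [fseq]; linarith
  | succ k ih =>
    refine ⟨ih.2, ?_⟩
    have e : fseq (k + 1 + 2) = -fseq (k + 2) - fseq (k + 1) / 5 := by
      rw [show k + 1 + 2 = k + 3 from rfl, fseq]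
    rw [e]
    push_cast
    rw [ih.1, ih.2]
    linear_combination -aux_rec_root a ha k - aux_rec_root b hb k

lemma aux_g (a b c : ℝ) (ha : a ^ 2 = -a - 1 / 5) (hb : b ^ 2 = -b - 1 / 5) (hab : a + b = -1)
    (hc : c * (a - b) = 1) (n : ℕ) : (gseq (n + 1) : ℝ) = c * (a ^ (n + 1) - b ^ (n + 1)) ∧
      (gseq (n + 2) : ℝ) = c * (a ^ (n + 2) - b ^ (n + 2)) := by
  induction n with
  | zero =>
    constructor
    · norm_num [gseq]; linarith
    · norm_num [gseq]; linear_combination -(a + b) * hc - hab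
  | succ k ih =>
    refine ⟨ih.2, ?_⟩
    have e : gseq (k + 1 + 2) = -gseq (k + 2) - gseq (k + 1) / 5 := by
      rw [show k + 1 + 2 = k + 3 from rfl, gseq]
    rw [e]
    push_cast
    rw [ih.1, ih.2]
    linear_combination -c * aux_rec_root a ha (k + 1) + c * aux_rec_root b hb (k + 1)

lemma aux_phi : 1 < goldenφ := by
  have h := aux_sq
  have h0 := aux_s_pos
  unfold goldenφ
  nlinarith

lemma aux_main (n : ℕ) :
    (fseq (n + 2) : ℝ) / (fseq (n + 1) : ℝ) + goldenφ / Real.sqrt 5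
        = 1 / (Real.sqrt 5 * (goldenφ ^ (2 * n) + 1)) ∧
      (gseq (n + 2) : ℝ) / (gseq (n + 1) : ℝ) + goldenφ / Real.sqrt 5
        = -(1 / (Real.sqrt 5 * (goldenφ ^ (2 * (n + 1)) - 1))) := by
  have h := aux_sq
  have h0 := aux_s_pos
  have hp := aux_phi
  obtain ⟨b, hbd⟩ : ∃ b : ℝ, b = (-1 + Real.sqrt 5 / 5) / 2 := ⟨_, rfl⟩
  obtain ⟨a, had⟩ : ∃ a : ℝ, a = (-1 - Real.sqrt 5 / 5) / 2 := ⟨_, rfl⟩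
  have hb : b ^ 2 = -b - 1 / 5 := by rw [hbd]; linear_combination h / 100
  have ha : a ^ 2 = -a - 1 / 5 := by rw [had]; linear_combination h / 100
  have hab : a + b = -1 := by rw [had, hbd]; ring
  have hc : -Real.sqrt 5 * (a - b) = 1 := by rw [had, hbd]; linear_combination h / 5
  have hb0 : b ≠ 0 := by
    rintro rfl
    norm_num at hb
  have haq : a = b * goldenφ ^ 2 := by
    rw [had, hbd, goldenφ]; linear_combination (-1 / 40 - Real.sqrt 5 / 40 + 1 / 10) * h
  have haphi : goldenφ / Real.sqrt 5 = -a := by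
    rw [div_eq_iff h0.ne', had, goldenφ]; linear_combination -h / 10
  have hpow : ∀ m : ℕ, a ^ m = b ^ m * goldenφ ^ (2 * m) := by
    intro m; rw [haq, mul_pow, ← pow_mul]
  obtain ⟨f1, f2⟩ := aux_f a b ha hb hab n
  obtain ⟨g1, g2⟩ := aux_g a b _ ha hb hab hc n
  have hbn : b ^ n ≠ 0 := pow_ne_zero _ hb0
  have hbn1 : b ^ (n + 1) ≠ 0 := pow_ne_zero _ hb0
  have hq1 : goldenφ ^ (2 * n) + 1 ≠ 0 := by positivity
  have hq2 : goldenφ ^ (2 * (n + 1)) - 1 ≠ 0 :=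
    (sub_pos.mpr (one_lt_pow₀ hp (by omega))).ne'
  rw [haphi]
  constructor
  · have e1 : (fseq (n + 1) : ℝ) = b ^ n * (goldenφ ^ (2 * n) + 1) := by rw [f1, hpow]; ring
    have e2 : (fseq (n + 2) : ℝ) = a * (b ^ n * (goldenφ ^ (2 * n) + 1)) + b ^ n * (b - a) := by
      rw [f2, pow_succ a, hpow]; ring
    rw [e1, e2]
    field_simp
    linear_combination hc
  · have e1 : (gseq (n + 1) : ℝ) =
        -Real.sqrt 5 * (b ^ (n + 1) * (goldenφ ^ (2 * (n + 1)) - 1)) := by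
      rw [g1, hpow]; ring
    have e2 : (gseq (n + 2) : ℝ) =
        a * (-Real.sqrt 5 * (b ^ (n + 1) * (goldenφ ^ (2 * (n + 1)) - 1))) + b ^ (n + 1) := by
      rw [g2, pow_succ a (n + 1), hpow]; linear_combination b ^ (n + 1) * hc
    rw [e1, e2]
    generalize goldenφ ^ (2 * (n + 1)) - 1 = Q at *
    generalize b ^ (n + 1) = B at *
    field_simp
    ring

lemma aux_top : Tendsto (fun n : ℕ => goldenφ ^ (2 * n)) atTop atTop := by
  simp_rw [pow_mul]
  exact tendsto_pow_atTop_atTop_of_one_lt (one_lt_pow₀ aux_phi (by norm_num))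

theorem stmt_6 :
    (∀ r : ℕ, 1 ≤ r →
      |(fseq (r + 1) : ℝ) / (fseq r : ℝ) + goldenφ / Real.sqrt 5|
        = 1 / (Real.sqrt 5 * (goldenφ ^ (2 * r - 2) + 1)) ∧
      |(gseq (r + 1) : ℝ) / (gseq r : ℝ) + goldenφ / Real.sqrt 5|
        = 1 / (Real.sqrt 5 * (goldenφ ^ (2 * r) - 1))) ∧
    Tendsto (fun r : ℕ => (fseq (r + 1) : ℝ) / (fseq r : ℝ)) atTop
      (nhds (-(goldenφ / Real.sqrt 5))) ∧
    Tendsto (fun r : ℕ => (gseq (r + 1) : ℝ) / (gseq r : ℝ)) atTop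
      (nhds (-(goldenφ / Real.sqrt 5))) := by
  refine ⟨?_, ?_, ?_⟩
  · intro r hr
    obtain ⟨n, rfl⟩ : ∃ n, r = n + 1 := ⟨r - 1, by omega⟩
    obtain ⟨h1, h2⟩ := aux_main n
    have h0 := aux_s_pos
    have hp := aux_phi
    have hq2 : 0 < goldenφ ^ (2 * (n + 1)) - 1 :=
      sub_pos.mpr (one_lt_pow₀ hp (by omega))
    rw [show n + 1 + 1 = n + 2 from rfl, h1, h2, abs_neg,
      show 2 * (n + 1) - 2 = 2 * n by omega]
    exact ⟨abs_of_pos (by positivity), abs_of_pos (by positivity)⟩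
  · rw [← tendsto_add_atTop_iff_nat 1]
    have e : (fun n : ℕ => (fseq (n + 1 + 1) : ℝ) / (fseq (n + 1) : ℝ)) =
        fun n : ℕ => (Real.sqrt 5 * (goldenφ ^ (2 * n) + 1))⁻¹ + -(goldenφ / Real.sqrt 5) := by
      funext n
      have := (aux_main n).1
      rw [one_div] at this
      rw [← this]; ring
    rw [e]
    have t : Tendsto (fun n : ℕ => (Real.sqrt 5 * (goldenφ ^ (2 * n) + 1))⁻¹) atTop (nhds 0) :=
      ((tendsto_atTop_add_const_right _ 1 aux_top).const_mul_atTop aux_s_pos).inv_tendsto_atTop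
    simpa using t.add_const (-(goldenφ / Real.sqrt 5))
  · rw [← tendsto_add_atTop_iff_nat 1]
    have e : (fun n : ℕ => (gseq (n + 1 + 1) : ℝ) / (gseq (n + 1) : ℝ)) =
        fun n : ℕ => -(Real.sqrt 5 * (goldenφ ^ (2 * (n + 1)) + -1))⁻¹
          + -(goldenφ / Real.sqrt 5) := by
      funext n
      have := (aux_main n).2
      rw [one_div, sub_eq_add_neg] at this
      rw [← this]; ring
    rw [e]
    have t : Tendsto (fun n : ℕ => (Real.sqrt 5 * (goldenφ ^ (2 * (n + 1)) + -1))⁻¹)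
        atTop (nhds 0) :=
      ((tendsto_atTop_add_const_right _ (-1) (aux_top.comp (tendsto_add_atTop_nat 1))).const_mul_atTop
        aux_s_pos).inv_tendsto_atTop
    simpa using t.neg.add_const (-(goldenφ / Real.sqrt 5))
end

section
/- Let f, g be the sequences with f(1) = 2, f(2) = −1, g(1) = 1, g(2) = −1 and f(r+2) = −f(r+1) − f(r)/5, g(r+2) = −g(r+1) − g(r)/5 for r ≥ 1. Then for every r ≥ 1: 5^{r−1}·f(2r−1) = L_{2r−2}, 5^{r−1}·f(2r) = −F_{2r−1}, 5^{r−1}·g(2r−1) = L_{2r−1}, and 5^{r−1}·g(2r) = −F_{2r}. In particular the non-reduced numerators of the two rational sequences consist of interlacing Lucas and (negated) Fibonacci numbers. -/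
/-- The Lucas numbers: `L 0 = 2`, `L 1 = 1`, `L (n+2) = L (n+1) + L n`. -/
def lucas : ℕ → ℕ
  | 0 => 2
  | 1 => 1
  | n + 2 => lucas (n + 1) + lucas n

theorem lucas_fib (n : ℕ) :
    lucas n + Nat.fib n = 2 * Nat.fib (n + 1) ∧
    lucas (n + 1) + Nat.fib (n + 1) = 2 * Nat.fib (n + 2) := by
  induction n with
  | zero => simp [lucas]
  | succ k ih =>
    refine ⟨ih.2, ?_⟩
    have h1 : lucas (k + 1 + 1) = lucas (k + 1) + lucas k := by rw [lucas]
    have h2 : Nat.fib (k + 1 + 1) = Nat.fib k + Nat.fib (k + 1) := Nat.fib_add_two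
    have h3 : Nat.fib (k + 1 + 2) = Nat.fib (k + 1) + Nat.fib (k + 1 + 1) := Nat.fib_add_two
    have h4 : Nat.fib (k + 2) = Nat.fib k + Nat.fib (k + 1) := Nat.fib_add_two
    omega

theorem interlace (s : ℕ) :
    (5 : ℚ) ^ s * fseq (2 * s + 1) = (lucas (2 * s) : ℚ) ∧
    (5 : ℚ) ^ s * fseq (2 * s + 2) = -(Nat.fib (2 * s + 1) : ℚ) ∧
    (5 : ℚ) ^ s * gseq (2 * s + 1) = (lucas (2 * s + 1) : ℚ) ∧
    (5 : ℚ) ^ s * gseq (2 * s + 2) = -(Nat.fib (2 * s + 2) : ℚ) := by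
  induction s with
  | zero => simp [fseq, gseq, lucas]
  | succ s ih =>
    obtain ⟨a, b, c, d⟩ := ih
    have f3 : fseq (2 * s + 3) = -fseq (2 * s + 2) - fseq (2 * s + 1) / 5 := by rw [fseq]
    have f4 : fseq (2 * s + 4) = -fseq (2 * s + 3) - fseq (2 * s + 2) / 5 := by rw [fseq]
    have g3 : gseq (2 * s + 3) = -gseq (2 * s + 2) - gseq (2 * s + 1) / 5 := by rw [gseq]
    have g4 : gseq (2 * s + 4) = -gseq (2 * s + 3) - gseq (2 * s + 2) / 5 := by rw [gseq]
    have l2 : (lucas (2 * s + 2) : ℚ) = lucas (2 * s + 1) + lucas (2 * s) := by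
      rw [lucas]; push_cast; ring
    have l3 : (lucas (2 * s + 3) : ℚ) = lucas (2 * s + 2) + lucas (2 * s + 1) := by
      rw [lucas]; push_cast; ring
    have p2 : (Nat.fib (2 * s + 2) : ℚ) = Nat.fib (2 * s) + Nat.fib (2 * s + 1) := by
      exact_mod_cast Nat.fib_add_two
    have p3 : (Nat.fib (2 * s + 3) : ℚ) = Nat.fib (2 * s + 1) + Nat.fib (2 * s + 2) := by
      exact_mod_cast Nat.fib_add_two
    have p4 : (Nat.fib (2 * s + 4) : ℚ) = Nat.fib (2 * s + 2) + Nat.fib (2 * s + 3) := by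
      exact_mod_cast Nat.fib_add_two
    have q1 : (lucas (2 * s) : ℚ) + Nat.fib (2 * s) = 2 * Nat.fib (2 * s + 1) := by
      exact_mod_cast (lucas_fib (2 * s)).1
    have q2 : (lucas (2 * s + 1) : ℚ) + Nat.fib (2 * s + 1) = 2 * Nat.fib (2 * s + 2) := by
      exact_mod_cast (lucas_fib (2 * s)).2
    have e1 : 2 * (s + 1) = 2 * s + 2 := by ring
    rw [e1]
    change _ * fseq (2 * s + 3) = _ ∧ _ * fseq (2 * s + 4) = -(Nat.fib (2 * s + 3) : ℚ) ∧
      _ * gseq (2 * s + 3) = (lucas (2 * s + 3) : ℚ) ∧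
      _ * gseq (2 * s + 4) = -(Nat.fib (2 * s + 4) : ℚ)
    rw [f4, f3, g4, g3, pow_succ]
    refine ⟨?_, ?_, ?_, ?_⟩ <;> linarith

theorem stmt_7 (r : ℕ) (hr : 1 ≤ r) :
    (5 : ℚ) ^ (r - 1) * fseq (2 * r - 1) = (lucas (2 * r - 2) : ℚ) ∧
    (5 : ℚ) ^ (r - 1) * fseq (2 * r) = -(Nat.fib (2 * r - 1) : ℚ) ∧
    (5 : ℚ) ^ (r - 1) * gseq (2 * r - 1) = (lucas (2 * r - 1) : ℚ) ∧
    (5 : ℚ) ^ (r - 1) * gseq (2 * r) = -(Nat.fib (2 * r) : ℚ) := by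
  obtain ⟨s, rfl⟩ : ∃ s, r = s + 1 := ⟨r - 1, by omega⟩
  exact interlace s
end

section
/- Let m be a positive integer and n = 2m+1. For every integer r and every j with 0 ≤ j ≤ m−1: 𝓕_r^{(m,m−j)} = Σ_{k=0}^{j} binom(j+k+1, 2k+1)·𝓕_{r−k}^{(m,m)} and 𝓖_r^{(m,m−j)} = −Σ_{k=0}^{j} binom(j+k, 2k)·𝓕_{r−k}^{(m,m)}; moreover 𝓕_r^{(m,m)} = −𝓖_r^{(m,m)} for all integers r. -/
open Real Finset Filter

/-- `φ_{m,k} = 2·cos(2πk/(2m+1))`. -/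
noncomputable def phiF (m : ℕ) (k : ℤ) : ℝ := 2 * Real.cos (2 * Real.pi * k / (2 * m + 1))

/-- `μ_{m,k} = φ_{m,k} − 2`. -/
noncomputable def muF (m : ℕ) (k : ℤ) : ℝ := phiF m k - 2

/-- The `m`-dimensional interlacing Fibonacci sequence
`𝓕_r^{(m,j)} = Σ_{t=1}^{m} μ_{m,t}^{−r}·(φ_{m,jt} − φ_{m,(j−1)t})`. -/
noncomputable def Fcal (m : ℕ) (r : ℤ) (j : ℤ) : ℝ :=
  ∑ t ∈ Finset.Icc 1 m, (muF m t) ^ (-r) * (phiF m (j * t) - phiF m ((j - 1) * t))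

/-- The companion sequence
`𝓖_r^{(m,j)} = Σ_{t=1}^{m} μ_{m,t}^{−r}·(φ_{m,(j+1)t} − 2φ_{m,jt} + φ_{m,(j−1)t})`. -/
noncomputable def Gcal (m : ℕ) (r : ℤ) (j : ℤ) : ℝ :=
  ∑ t ∈ Finset.Icc 1 m,
    (muF m t) ^ (-r) * (phiF m ((j + 1) * t) - 2 * phiF m (j * t) + phiF m ((j - 1) * t))

/-- Coefficient polynomial for `𝓕`. -/
noncomputable def polyA (x : ℝ) (j : ℕ) : ℝ :=
  ∑ k ∈ Finset.range (j + 1), (Nat.choose (j + k + 1) (2 * k + 1) : ℝ) * x ^ k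

/-- Coefficient polynomial for `𝓖`. -/
noncomputable def polyB (x : ℝ) (j : ℕ) : ℝ :=
  ∑ k ∈ Finset.range (j + 1), (Nat.choose (j + k) (2 * k) : ℝ) * x ^ k

lemma polyA_succ (x : ℝ) (j : ℕ) : polyA x (j + 1) = polyA x j + polyB x (j + 1) := by
  have h : polyA x j = ∑ k ∈ Finset.range (j + 1 + 1),
      (Nat.choose (j + k + 1) (2 * k + 1) : ℝ) * x ^ k := by
    rw [Finset.sum_range_succ, Nat.choose_eq_zero_of_lt (by omega)]
    simp [polyA]
  rw [h, polyA, polyB, ← Finset.sum_add_distrib]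
  refine Finset.sum_congr rfl fun k _ => ?_
  rw [Nat.choose_succ_succ (j + 1 + k) (2 * k), show j + 1 + k = j + k + 1 by ring]
  push_cast
  ring

lemma polyB_succ (x : ℝ) (j : ℕ) : polyB x (j + 1) = polyB x j + x * polyA x j := by
  have h : polyB x j = ∑ k ∈ Finset.range (j + 1),
      (Nat.choose (j + (k + 1)) (2 * (k + 1)) : ℝ) * x ^ (k + 1) + 1 := by
    rw [Finset.sum_range_succ, Nat.choose_eq_zero_of_lt (by omega), polyB,
      Finset.sum_range_succ']
    simp
  rw [h, polyB, Finset.sum_range_succ', polyA, Finset.mul_sum, add_right_comm (Finset.sum _ _) 1,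
    ← Finset.sum_add_distrib]
  congr 1
  · refine Finset.sum_congr rfl fun k _ => ?_
    rw [show j + 1 + (k + 1) = (j + k + 1) + 1 by ring, show 2 * (k + 1) = 2 * k + 1 + 1 by ring,
      Nat.choose_succ_succ, show j + (k + 1) = j + k + 1 by ring]
    push_cast
    ring
  · simp

lemma rec_solve (x : ℝ) (c : ℤ → ℝ) (m : ℤ) (h : ∀ k, c (k + 1) + c (k - 1) = (x + 2) * c k)
    (h0 : c (m + 1) = c m) (j : ℕ) :
    c (m - j) - c (m - j - 1) = polyA x j * (c m - c (m - 1)) ∧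
    c (m - j + 1) - 2 * c (m - j) + c (m - j - 1) = -(polyB x j * (c m - c (m - 1))) := by
  induction j with
  | zero => simp [polyA, polyB, h0]; ring
  | succ j ih =>
    obtain ⟨ih1, ih2⟩ := ih
    have e1 : m - ((j + 1 : ℕ) : ℤ) = m - j - 1 := by push_cast; ring
    have e2 : m - (j : ℤ) - 1 + 1 = m - j := by ring
    have r1 := h (m - j)
    have r2 := h (m - j - 1)
    rw [e2] at r2
    rw [e1, e2, polyA_succ, polyB_succ]
    constructor
    · linear_combination (1 + x) * ih1 - ih2 + r1 - r2
    · linear_combination ih2 - x * ih1 + r2 - r1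

lemma phiF_rec (m : ℕ) (t k : ℤ) :
    phiF m ((k + 1) * t) + phiF m ((k - 1) * t) = (muF m t + 2) * phiF m (k * t) := by
  unfold muF phiF
  have a : 2 * Real.pi * (((k + 1) * t : ℤ) : ℝ) / (2 * m + 1) =
    2 * Real.pi * ((k * t : ℤ) : ℝ) / (2 * m + 1) + 2 * Real.pi * t / (2 * m + 1) := by
    push_cast; ring
  have b : 2 * Real.pi * (((k - 1) * t : ℤ) : ℝ) / (2 * m + 1) =
    2 * Real.pi * ((k * t : ℤ) : ℝ) / (2 * m + 1) - 2 * Real.pi * t / (2 * m + 1) := by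
    push_cast; ring
  rw [a, b, Real.cos_add, Real.cos_sub]
  ring

lemma phiF_refl (m : ℕ) (t : ℤ) : phiF m (((m : ℤ) + 1) * t) = phiF m ((m : ℤ) * t) := by
  unfold phiF
  have a : 2 * Real.pi * ((((m : ℤ) + 1) * t : ℤ) : ℝ) / (2 * m + 1) =
    t * (2 * Real.pi) - 2 * Real.pi * (((m : ℤ) * t : ℤ) : ℝ) / (2 * m + 1) := by
    have : (2 * (m : ℝ) + 1) ≠ 0 := by positivity
    push_cast
    field_simp
    ring
  rw [a, Real.cos_int_mul_two_pi_sub]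

lemma muF_ne (m t : ℕ) (ht : t ∈ Finset.Icc 1 m) : muF m t ≠ 0 := by
  rw [Finset.mem_Icc] at ht
  unfold muF phiF
  intro h
  have hc : Real.cos (2 * Real.pi * ((t : ℤ) : ℝ) / (2 * m + 1)) = 1 := by linarith
  have hp := Real.pi_pos
  have h1 : (1 : ℝ) ≤ t := by exact_mod_cast ht.1
  have h2 : (t : ℝ) ≤ m := by exact_mod_cast ht.2
  have hpos : 0 < 2 * Real.pi * ((t : ℤ) : ℝ) / (2 * m + 1) := by
    push_cast; positivity
  have hlt : 2 * Real.pi * ((t : ℤ) : ℝ) / (2 * m + 1) < 2 * Real.pi := by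
    rw [div_lt_iff₀ (by positivity)]
    push_cast
    apply mul_lt_mul_of_pos_left _ (by positivity)
    linarith
  rw [Real.cos_eq_one_iff_of_lt_of_lt (by linarith) hlt] at hc
  linarith

lemma comb_sum (m : ℕ) (r : ℤ) (j : ℕ) (a : ℕ → ℝ) :
    ∑ k ∈ Finset.range (j + 1), a k * Fcal m (r - k) m =
    ∑ t ∈ Finset.Icc 1 m, (muF m t) ^ (-r) *
      ((∑ k ∈ Finset.range (j + 1), a k * (muF m t) ^ k) *
        (phiF m ((m : ℤ) * t) - phiF m (((m : ℤ) - 1) * t))) := by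
  unfold Fcal
  simp_rw [Finset.mul_sum, Finset.sum_mul, Finset.mul_sum]
  rw [Finset.sum_comm]
  refine Finset.sum_congr rfl fun t ht => Finset.sum_congr rfl fun k _ => ?_
  rw [show -(r - (k : ℤ)) = -r + k by ring, zpow_add₀ (muF_ne m t ht), zpow_natCast]
  ring

theorem stmt_8 (m : ℕ) (hm : 0 < m) :
    (∀ r : ℤ, ∀ j : ℕ, j + 1 ≤ m →
      Fcal m r ((m : ℤ) - j) =
        ∑ k ∈ Finset.range (j + 1),
          (Nat.choose (j + k + 1) (2 * k + 1) : ℝ) * Fcal m (r - k) m ∧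
      Gcal m r ((m : ℤ) - j) =
        -∑ k ∈ Finset.range (j + 1),
          (Nat.choose (j + k) (2 * k) : ℝ) * Fcal m (r - k) m) ∧
    (∀ r : ℤ, Fcal m r m = -Gcal m r m) := by
  refine ⟨fun r j _ => ⟨?_, ?_⟩, fun r => ?_⟩
  · rw [comb_sum m r j (fun k => (Nat.choose (j + k + 1) (2 * k + 1) : ℝ)), Fcal]
    refine Finset.sum_congr rfl fun t _ => ?_
    have := (rec_solve (muF m t) (fun k => phiF m (k * t)) m (phiF_rec m t) (phiF_refl m t) j).1
    exact congrArg _ this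
  · rw [comb_sum m r j (fun k => (Nat.choose (j + k) (2 * k) : ℝ)), Gcal,
      ← Finset.sum_neg_distrib]
    refine Finset.sum_congr rfl fun t _ => ?_
    have := (rec_solve (muF m t) (fun k => phiF m (k * t)) m (phiF_rec m t) (phiF_refl m t) j).2
    rw [← mul_neg]
    exact congrArg _ this
  · rw [Fcal, Gcal, ← Finset.sum_neg_distrib]
    refine Finset.sum_congr rfl fun t _ => ?_
    rw [phiF_refl]
    ring
end

section
/- Let m be a positive integer and n = 2m+1. For every integer r and every j with 1 ≤ j ≤ m: 𝓕_r^{(m,j)} = (−1)^{r−1} · Σ_{t=1}^{m} (2·sin((2j−1)πt/n)) / (2·sin(πt/n))^{2r−1} and 𝓖_r^{(m,j)} = (−1)^{r−1} · Σ_{t=1}^{m} (2·cos(2jπt/n)) / (2·sin(πt/n))^{2r−2}. (Geometrically, these express the sequence terms as sums of ratios of powers of the signed diagonals d_{n,k} = 2·sin(πk/n) of the regular n-gon inscribed in the unit circle.) -/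
open Real Finset Filter

theorem aux_neg_sq_zpow (s : ℝ) (r : ℤ) :
    (-(s ^ 2)) ^ (-r) = -((-1 : ℝ) ^ (r - 1) * (s ^ (2 * r))⁻¹) := by
  have h1 : -(s ^ 2) = (-1) * s ^ 2 := by ring
  have h2 : ((-1 : ℝ) ^ r)⁻¹ = (-1) ^ r := by
    rw [← inv_zpow]; norm_num
  have h3 : (s ^ 2) ^ r = s ^ (2 * r) := by
    rw [zpow_mul]; norm_cast
  rw [h1, zpow_neg, mul_zpow, mul_inv, h2, h3, zpow_sub_one₀ (by norm_num)]
  norm_num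

theorem aux_phi_s9 (m : ℕ) (k : ℤ) (t : ℕ) :
    phiF m (k * t) = 2 * Real.cos (2 * k * (Real.pi * t / (2 * m + 1))) := by
  unfold phiF
  push_cast
  congr 2
  ring

theorem aux_mu (m : ℕ) (t : ℕ) :
    muF m t = -((2 * Real.sin (Real.pi * t / (2 * m + 1))) ^ 2) := by
  have h := aux_phi_s9 m 1 t
  rw [one_mul] at h
  unfold muF
  rw [h]
  push_cast
  rw [mul_one, Real.cos_two_mul, Real.cos_sq']
  ring

theorem aux_sin (m t : ℕ) (ht : t ∈ Finset.Icc 1 m) :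
    2 * Real.sin (Real.pi * t / (2 * m + 1)) ≠ 0 := by
  rw [Finset.mem_Icc] at ht
  have h1 : (1 : ℝ) ≤ t := by exact_mod_cast ht.1
  have h2 : (t : ℝ) ≤ m := by exact_mod_cast ht.2
  have := Real.pi_pos
  have : 0 < Real.sin (Real.pi * t / (2 * m + 1)) := by
    apply Real.sin_pos_of_pos_of_lt_pi
    · positivity
    · rw [div_lt_iff₀ (by positivity)]
      exact mul_lt_mul_of_pos_left (by linarith) Real.pi_pos
  positivity

theorem stmt_9 (m : ℕ) (hm : 0 < m) (r : ℤ) (j : ℕ) (hj1 : 1 ≤ j) (hjm : j ≤ m) :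
    Fcal m r j =
      (-1 : ℝ) ^ (r - 1) *
        ∑ t ∈ Finset.Icc 1 m,
          (2 * Real.sin ((2 * (j : ℝ) - 1) * Real.pi * t / (2 * m + 1))) /
            (2 * Real.sin (Real.pi * t / (2 * m + 1))) ^ (2 * r - 1) ∧
    Gcal m r j =
      (-1 : ℝ) ^ (r - 1) *
        ∑ t ∈ Finset.Icc 1 m,
          (2 * Real.cos (2 * (j : ℝ) * Real.pi * t / (2 * m + 1))) /
            (2 * Real.sin (Real.pi * t / (2 * m + 1))) ^ (2 * r - 2) := by
  constructor
  · unfold Fcal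
    rw [Finset.mul_sum]
    refine Finset.sum_congr rfl fun t ht => ?_
    have hs := aux_sin m t ht
    rw [aux_mu, aux_neg_sq_zpow, aux_phi_s9, aux_phi_s9, zpow_sub_one₀ hs]
    have e : (2 * (j : ℝ) - 1) * Real.pi * t / (2 * m + 1)
        = (2 * (j : ℝ) - 1) * (Real.pi * t / (2 * m + 1)) := by ring
    rw [e]
    push_cast
    generalize Real.pi * t / (2 * m + 1) = a at *
    have e1 : 2 * (j : ℝ) * a = (2 * (j : ℝ) - 1) * a + a := by ring
    have e2 : 2 * ((j : ℝ) - 1) * a = (2 * (j : ℝ) - 1) * a - a := by ring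
    rw [e1, e2, Real.cos_add, Real.cos_sub, div_eq_mul_inv, mul_inv, inv_inv]
    ring
  · unfold Gcal
    rw [Finset.mul_sum]
    refine Finset.sum_congr rfl fun t ht => ?_
    have hs := aux_sin m t ht
    rw [aux_mu, aux_neg_sq_zpow, aux_phi_s9, aux_phi_s9, aux_phi_s9, zpow_sub₀ hs]
    have e : 2 * (j : ℝ) * Real.pi * t / (2 * m + 1)
        = 2 * (j : ℝ) * (Real.pi * t / (2 * m + 1)) := by ring
    rw [e]
    push_cast
    generalize Real.pi * t / (2 * m + 1) = a at *
    have e1 : 2 * ((j : ℝ) + 1) * a = 2 * (j : ℝ) * a + 2 * a := by ring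
    have e2 : 2 * ((j : ℝ) - 1) * a = 2 * (j : ℝ) * a - 2 * a := by ring
    have e3 : (2 * Real.sin a) ^ (2 : ℤ) = (2 * Real.sin a) ^ 2 := by norm_cast
    rw [e1, e2, Real.cos_add, Real.cos_sub, e3, div_eq_mul_inv, inv_div, div_eq_mul_inv,
      Real.cos_two_mul a, Real.cos_sq']
    ring
end

section
/- Let m be a positive integer, n = 2m+1, and let j, k satisfy 1 ≤ j ≤ m and 1 ≤ k ≤ m. Then the sequence of real numbers r ↦ 𝓕_r^{(m,j)} / 𝓕_r^{(m,k)} (r ranging over the positive integers) converges, as r → ∞, to (φ_{m,j} − φ_{m,j−1}) / (φ_{m,k} − φ_{m,k−1}) = (2·cos(2πj/n) − 2·cos(2π(j−1)/n)) / (2·cos(2πk/n) − 2·cos(2π(k−1)/n)). -/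
open Real Finset Filter

theorem phiF_lt_aux (m : ℕ) (a b : ℤ) (ha : 0 ≤ a) (hab : a < b) (hb : b ≤ m) :
    phiF m b < phiF m a := by
  unfold phiF
  have hpos : (0 : ℝ) < 2 * m + 1 := by positivity
  have ha' : (0 : ℝ) ≤ a := by exact_mod_cast ha
  have hab' : (a : ℝ) < b := by exact_mod_cast hab
  have hb' : (b : ℝ) ≤ m := by exact_mod_cast hb
  have hpi := Real.pi_pos
  have h := Real.cos_lt_cos_of_nonneg_of_le_pi
    (x := 2 * Real.pi * a / (2 * m + 1)) (y := 2 * Real.pi * b / (2 * m + 1))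
    (by positivity)
    (by rw [div_le_iff₀ hpos]; nlinarith)
    (by gcongr)
  linarith

theorem phiF_zero_aux (m : ℕ) : phiF m 0 = 2 := by simp [phiF]

theorem Fcal_tendsto_aux (m : ℕ) (hm : 0 < m) (j : ℤ) :
    Tendsto (fun r : ℕ => (muF m 1) ^ r * Fcal m r j) atTop
      (nhds (phiF m j - phiF m (j - 1))) := by
  have hmu : ∀ t : ℤ, 0 < t → t ≤ m → muF m t < 0 := by
    intro t h1 h2
    have := phiF_lt_aux m 0 t le_rfl h1 h2
    rw [phiF_zero_aux] at this
    unfold muF; linarith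
  have h1 := hmu 1 one_pos (by exact_mod_cast hm)
  have heq : (fun r : ℕ => (muF m 1) ^ r * Fcal m r j) = fun r : ℕ =>
      ∑ t ∈ Finset.Icc 1 m, (muF m 1 / muF m t) ^ r *
        (phiF m (j * t) - phiF m ((j - 1) * t)) := by
    funext r
    unfold Fcal
    rw [Finset.mul_sum]
    refine Finset.sum_congr rfl fun t _ => ?_
    rw [zpow_neg, zpow_natCast, div_pow, div_eq_mul_inv]
    ring
  have hlim : phiF m j - phiF m (j - 1) = ∑ t ∈ Finset.Icc 1 m,
      if t = 1 then phiF m j - phiF m (j - 1) else 0 := by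
    rw [Finset.sum_ite_eq' , if_pos (by simp; omega)]
  rw [heq, hlim]
  refine tendsto_finset_sum _ fun t ht => ?_
  rw [Finset.mem_Icc] at ht
  by_cases h : t = 1
  · subst h
    simp [div_self h1.ne]
  · rw [if_neg h]
    have ht1 : (1 : ℤ) < t := by omega
    have htm : (t : ℤ) ≤ m := by omega
    have hneg := hmu t (by omega) htm
    have hlt : muF m t < muF m 1 := by
      have := phiF_lt_aux m 1 t (by norm_num) ht1 htm
      unfold muF; linarith
    have := (tendsto_pow_atTop_nhds_zero_of_lt_one (r := muF m 1 / muF m t)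
      (div_nonneg_of_nonpos h1.le hneg.le)
      ((div_lt_one_of_neg hneg).2 hlt)).mul_const (phiF m (j * t) - phiF m ((j - 1) * t))
    simpa using this

theorem stmt_11 (m : ℕ) (hm : 0 < m) (j k : ℕ) (hj1 : 1 ≤ j) (hjm : j ≤ m)
    (hk1 : 1 ≤ k) (hkm : k ≤ m) :
    Tendsto (fun r : ℕ => Fcal m r j / Fcal m r k) atTop
      (nhds ((phiF m j - phiF m ((j : ℤ) - 1)) / (phiF m k - phiF m ((k : ℤ) - 1)))) := by
  have hk : phiF m k - phiF m ((k : ℤ) - 1) ≠ 0 := by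
    have := phiF_lt_aux m ((k : ℤ) - 1) k (by omega) (by omega) (by omega)
    linarith
  have h1 : muF m 1 ≠ 0 := by
    have := phiF_lt_aux m 0 1 le_rfl one_pos (by exact_mod_cast hm)
    rw [phiF_zero_aux] at this
    unfold muF; linarith
  refine ((Fcal_tendsto_aux m hm j).div (Fcal_tendsto_aux m hm k) hk).congr fun r => ?_
  exact mul_div_mul_left _ _ (pow_ne_zero r h1)
end

section
/- Let m be a positive integer, n = 2m+1, r ≥ 0 an integer, and 1 ≤ j ≤ m. Then n·𝔉(2r+1, (r+j) mod n) = Σ_{t=1}^{m} μ_{m,t}^{r}·(φ_{m,jt} − φ_{m,(j−1)t}) = 𝓕_{−r}^{(m,j)}, and n·𝔉(2r+2, (r+j+1) mod n) = Σ_{t=1}^{m} μ_{m,t}^{r}·(φ_{m,(j+1)t} − 2φ_{m,jt} + φ_{m,(j−1)t}) = 𝓖_{−r}^{(m,j)}. Here the left-hand sides are integers multiplied by n, and the equalities hold in the real numbers. -/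
open Real Finset Filter

/-- The Fleck number `𝔉(N, a mod n) = Σ_{0 ≤ k ≤ N, k ≡ a (mod n)} (−1)^k·binom(N,k)`. -/
def fleck (N n : ℕ) (a : ℤ) : ℤ :=
  ∑ k ∈ Finset.range (N + 1),
    if (k : ℤ) ≡ a [ZMOD (n : ℤ)] then (-1) ^ k * (Nat.choose N k) else 0

theorem fleck_succ (N n : ℕ) (a : ℤ) :
    fleck (N + 1) n a = fleck N n a - fleck N n (a - 1) := by
  unfold fleck
  rw [Finset.sum_range_succ' _ (N + 1)]
  have h2 : ∑ k ∈ Finset.range (N + 1),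
      (if (k : ℤ) ≡ a [ZMOD (n : ℤ)] then (-1 : ℤ) ^ k * (Nat.choose N k) else 0)
      = ∑ k ∈ Finset.range (N + 1 + 1),
      (if (k : ℤ) ≡ a [ZMOD (n : ℤ)] then (-1 : ℤ) ^ k * (Nat.choose N k) else 0) := by
    rw [Finset.sum_range_succ _ (N + 1)]
    simp
  rw [h2, Finset.sum_range_succ' _ (N + 1), add_sub_right_comm, ← Finset.sum_sub_distrib]
  congr 1
  · apply Finset.sum_congr rfl
    intro k _
    have h : ((k + 1 : ℕ) : ℤ) ≡ a [ZMOD (n : ℤ)] ↔ (k : ℤ) ≡ a - 1 [ZMOD (n : ℤ)] := by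
      rw [Int.modEq_iff_dvd, Int.modEq_iff_dvd]
      push_cast
      rw [show a - (k + 1 : ℤ) = a - 1 - k by ring]
    simp only [h]
    split_ifs
    · rw [Nat.choose_succ_succ]
      push_cast
      ring
    · simp
  · simp

theorem dirichlet_aux (x : ℝ) (m : ℕ) :
    Real.sin (x / 2) * (1 + ∑ t ∈ Finset.Icc 1 m, 2 * Real.cos (t * x))
      = Real.sin (m * x + x / 2) := by
  induction m with
  | zero => simp
  | succ k ih =>
    rw [Finset.sum_Icc_succ_top (by omega), ← add_assoc, mul_add, ih]
    have e1 : (k : ℝ) * x + x / 2 = ((k + 1 : ℕ) : ℝ) * x - x / 2 := by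
      push_cast
      ring
    rw [e1, Real.sin_sub, Real.sin_add]
    ring

theorem orth (m : ℕ) (a : ℤ) :
    1 + ∑ t ∈ Finset.Icc 1 m, phiF m (a * t)
      = (2 * m + 1 : ℝ) * (if ((2 * m + 1 : ℕ) : ℤ) ∣ a then 1 else 0) := by
  have hn : (2 * m + 1 : ℝ) ≠ 0 := by positivity
  split_ifs with h
  · obtain ⟨c, rfl⟩ := h
    have : ∀ t ∈ Finset.Icc 1 m, phiF m (((2 * m + 1 : ℕ) : ℤ) * c * t) = 2 := by
      intro t _
      unfold phiF
      have e : 2 * Real.pi * ((((2 * m + 1 : ℕ) : ℤ) * c * (t : ℤ) : ℤ) : ℝ) / (2 * m + 1)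
          = ((c * t : ℤ) : ℝ) * (2 * Real.pi) := by
        push_cast
        field_simp
      rw [e, Real.cos_int_mul_two_pi]
      norm_num
    rw [Finset.sum_congr rfl this]
    simp
    ring
  · have hd := dirichlet_aux (2 * Real.pi * a / (2 * m + 1)) m
    have e1 : (m : ℝ) * (2 * Real.pi * a / (2 * m + 1)) + 2 * Real.pi * a / (2 * m + 1) / 2
        = a * Real.pi := by
      field_simp
    rw [e1, Real.sin_int_mul_pi] at hd
    have hs : Real.sin (2 * Real.pi * a / (2 * m + 1) / 2) ≠ 0 := by
      intro h0
      rw [Real.sin_eq_zero_iff] at h0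
      obtain ⟨c, hc⟩ := h0
      apply h
      refine ⟨c, ?_⟩
      have hp := Real.pi_ne_zero
      field_simp at hc
      have : (a : ℝ) = (2 * m + 1) * c := by linarith
      exact_mod_cast this
    have := (mul_eq_zero.mp hd).resolve_left hs
    rw [mul_zero, ← this]
    congr 1
    apply Finset.sum_congr rfl
    intro t _
    unfold phiF
    push_cast
    congr 2
    ring

theorem mu_mul (m : ℕ) (a t : ℤ) :
    muF m t * phiF m (a * t)
      = phiF m ((a + 1) * t) - 2 * phiF m (a * t) + phiF m ((a - 1) * t) := by
  unfold muF phiF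
  have e1 : 2 * Real.pi * (((a + 1) * t : ℤ) : ℝ) / (2 * m + 1)
      = 2 * Real.pi * ((a * t : ℤ) : ℝ) / (2 * m + 1) + 2 * Real.pi * t / (2 * m + 1) := by
    push_cast
    ring
  have e2 : 2 * Real.pi * (((a - 1) * t : ℤ) : ℝ) / (2 * m + 1)
      = 2 * Real.pi * ((a * t : ℤ) : ℝ) / (2 * m + 1) - 2 * Real.pi * t / (2 * m + 1) := by
    push_cast
    ring
  rw [e1, e2, Real.cos_add, Real.cos_sub]
  ring

theorem fleck_zero (n : ℕ) (a : ℤ) :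
    fleck 0 n a = if (n : ℤ) ∣ a then 1 else 0 := by
  simp [fleck, Int.modEq_iff_dvd]

theorem odd_case (m r : ℕ) : ∀ j : ℤ,
    ((2 * m + 1 : ℝ)) * (fleck (2 * r + 1) (2 * m + 1) ((r : ℤ) + j) : ℝ) =
        ∑ t ∈ Finset.Icc 1 m, (muF m t) ^ r * (phiF m (j * t) - phiF m ((j - 1) * t)) := by
  induction r with
  | zero =>
    intro j
    have h1 := orth m j
    have h2 := orth m (j - 1)
    simp only [pow_zero, one_mul, Finset.sum_sub_distrib]
    rw [fleck_succ, Nat.mul_zero, fleck_zero, fleck_zero]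
    simp only [Nat.cast_zero, zero_add]
    push_cast at h1 h2 ⊢
    linarith
  | succ k ih =>
    intro j
    have h1 := ih (j + 1)
    have h2 := ih j
    have h3 := ih (j - 1)
    rw [show 2 * (k + 1) + 1 = (2 * k + 1) + 1 + 1 by ring, fleck_succ (2 * k + 1 + 1), fleck_succ (2 * k + 1), fleck_succ (2 * k + 1)]
    rw [show (((k + 1 : ℕ) : ℤ) + j) = k + (j + 1) by push_cast; ring,
      show (k : ℤ) + (j + 1) - 1 = k + j by ring, show (k : ℤ) + j - 1 = k + (j - 1) by ring]
    push_cast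
    have : ∀ A B C : ℝ, (2 * m + 1 : ℝ) * (A - B - (B - C))
      = (2 * m + 1) * A - 2 * ((2 * m + 1) * B) + (2 * m + 1) * C := by intros; ring
    rw [this, h1, h2, h3, Finset.mul_sum, ← Finset.sum_sub_distrib, ← Finset.sum_add_distrib]
    apply Finset.sum_congr rfl
    intro t _
    rw [pow_succ, mul_assoc, mul_sub (muF m t), mu_mul, mu_mul]
    rw [show j - 1 + 1 = j by ring, show j + 1 - 1 = j by ring]
    ring

theorem stmt_12 (m : ℕ) (hm : 0 < m) (r : ℕ) (j : ℕ) (hj1 : 1 ≤ j) (hjm : j ≤ m) :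
    ((2 * m + 1 : ℝ)) * (fleck (2 * r + 1) (2 * m + 1) ((r : ℤ) + j) : ℝ) =
        ∑ t ∈ Finset.Icc 1 m, (muF m t) ^ r * (phiF m (j * t) - phiF m (((j : ℤ) - 1) * t)) ∧
    (∑ t ∈ Finset.Icc 1 m, (muF m t) ^ r * (phiF m (j * t) - phiF m (((j : ℤ) - 1) * t)))
        = Fcal m (-(r : ℤ)) j ∧
    ((2 * m + 1 : ℝ)) * (fleck (2 * r + 2) (2 * m + 1) ((r : ℤ) + j + 1) : ℝ) =
        ∑ t ∈ Finset.Icc 1 m,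
          (muF m t) ^ r *
            (phiF m ((j + 1) * t) - 2 * phiF m (j * t) + phiF m (((j : ℤ) - 1) * t)) ∧
    (∑ t ∈ Finset.Icc 1 m,
        (muF m t) ^ r *
          (phiF m ((j + 1) * t) - 2 * phiF m (j * t) + phiF m (((j : ℤ) - 1) * t)))
        = Gcal m (-(r : ℤ)) j := by
  refine ⟨odd_case m r j, ?_, ?_, ?_⟩
  · unfold Fcal
    simp
  · have h1 := odd_case m r (j + 1)
    have h2 := odd_case m r j
    rw [fleck_succ, show (r : ℤ) + j + 1 - 1 = r + j by ring, add_assoc (r : ℤ)]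
    push_cast
    rw [mul_sub, h1, h2, ← Finset.sum_sub_distrib]
    apply Finset.sum_congr rfl
    intro t _
    rw [show (j : ℤ) + 1 - 1 = j by ring]
    ring
  · unfold Gcal
    simp
end

section
/- Let m be a positive integer, n = 2m+1, and r ≥ 0 an integer. Then 𝔉(4r+1, (2r+1) mod n) = −Σ_{j=1}^{m} ( 𝔉(2r+1, (r+j) mod n) )². Equivalently, Σ_{a∈ℤ} (−1)^a · binom(4r+1, 2r+1+an) = Σ_{j=1}^{m} ( Σ_{a∈ℤ} (−1)^{r+j+a} · binom(2r+1, r+j+an) )², where binom(N,k) = 0 unless 0 ≤ k ≤ N, so all sums are finite. -/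
open Finset

def zfleck (n N : ℕ) (a : ZMod n) : ℤ :=
  ∑ k ∈ Finset.range (N + 1), if (k : ZMod n) = a then (-1) ^ k * (Nat.choose N k : ℤ) else 0

lemma fleck_eq_zfleck (N n : ℕ) (a : ℤ) : fleck N n a = zfleck n N (a : ZMod n) := by
  unfold fleck zfleck
  refine Finset.sum_congr rfl fun k _ => ?_
  have h : ((k : ZMod n) = (a : ZMod n)) ↔ (k : ℤ) ≡ a [ZMOD (n : ℤ)] := by
    rw [← ZMod.intCast_eq_intCast_iff]; simp
  simp only [h]

lemma zfleck_succ (n N : ℕ) (a : ZMod n) :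
    zfleck n (N + 1) a = zfleck n N a - zfleck n N (a - 1) := by
  have h1 : zfleck n N a = ∑ k ∈ Finset.range (N + 1 + 1),
      if (k : ZMod n) = a then (-1) ^ k * (Nat.choose N k : ℤ) else 0 := by
    rw [Finset.sum_range_succ]; simp [zfleck]
  rw [h1]
  unfold zfleck
  rw [Finset.sum_range_succ', Finset.sum_range_succ' _ (N + 1), add_sub_right_comm,
    ← Finset.sum_sub_distrib]
  congr 1
  · refine Finset.sum_congr rfl fun k _ => ?_
    have h : ((k : ZMod n) = a - 1) ↔ ((k + 1 : ℕ) : ZMod n) = a := by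
      rw [eq_sub_iff_add_eq]; simp
    simp only [h]
    split_ifs
    · rw [Nat.choose_succ_succ]; push_cast; ring
    · simp
  · simp

lemma zfleck_refl (n N : ℕ) (a : ZMod n) :
    zfleck n N (N - a) = (-1) ^ N * zfleck n N a := by
  unfold zfleck
  rw [← Finset.sum_range_reflect, Finset.mul_sum]
  refine Finset.sum_congr rfl fun k hk => ?_
  have hk' : k ≤ N := by simpa [Nat.lt_succ_iff] using hk
  have e : N + 1 - 1 - k = N - k := by omega
  rw [e]
  have h : (((N - k : ℕ) : ZMod n) = N - a) ↔ (k : ZMod n) = a := by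
    rw [Nat.cast_sub hk']; simp
  simp only [h]
  split_ifs
  · rw [Nat.choose_symm hk', ← mul_assoc]
    congr 1
    obtain ⟨d, rfl⟩ := Nat.exists_eq_add_of_le hk'
    rw [Nat.add_sub_cancel_left, pow_add]
    have : ((-1 : ℤ) ^ k) * (-1) ^ k = 1 := by rw [← mul_pow]; simp
    linear_combination -(-1 : ℤ) ^ d * this
  · simp

lemma zfleck_conv (n : ℕ) [NeZero n] (M N : ℕ) (a : ZMod n) :
    ∑ c : ZMod n, zfleck n M c * zfleck n N (a - c) = zfleck n (M + N) a := by
  induction M generalizing a with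
  | zero => simp [zfleck]
  | succ M ih =>
    have e : M + 1 + N = M + N + 1 := by ring
    rw [e, zfleck_succ n (M + N), ← ih, ← ih]
    simp only [zfleck_succ n M, sub_mul, Finset.sum_sub_distrib]
    congr 1
    refine Fintype.sum_equiv (Equiv.subRight 1) _ _ fun c => ?_
    simp

lemma sum_zmod_range (n : ℕ) [NeZero n] (h : ZMod n → ℤ) :
    ∑ c : ZMod n, h c = ∑ j ∈ Finset.range n, h (j : ZMod n) := by
  symm
  refine Finset.sum_bij (fun j _ => (j : ZMod n)) (by simp) ?_ ?_ (by simp)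
  · intro a ha b hb hab
    have := congrArg ZMod.val hab
    rwa [ZMod.val_natCast_of_lt (by simpa using ha),
      ZMod.val_natCast_of_lt (by simpa using hb)] at this
  · intro c _
    exact ⟨c.val, by simpa using ZMod.val_lt c, by simp⟩

lemma sum_symm (m : ℕ) (h : ZMod (2 * m + 1) → ℤ) (hs : ∀ c, h (1 - c) = h c)
    (h0 : h (m + 1) = 0) :
    ∑ c : ZMod (2 * m + 1), h c = 2 * ∑ i ∈ Finset.range m, h ((i : ZMod (2 * m + 1)) + 1) := by
  have hz : (2 * (m : ZMod (2 * m + 1)) + 1) = 0 := by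
    have := ZMod.natCast_self (2 * m + 1)
    push_cast at this; exact this
  have hsplit : ∀ f : ℕ → ℤ, ∑ k ∈ Finset.range (2 * m), f k
      = ∑ k ∈ Finset.range m, f k + ∑ k ∈ Finset.range m, f (m + k) := by
    intro f
    rw [two_mul, Finset.sum_range_add]
  have e1 : ∑ c : ZMod (2 * m + 1), h c = ∑ c : ZMod (2 * m + 1), h (c + (m + 1)) :=
    (Fintype.sum_equiv (Equiv.addRight ((m : ZMod (2 * m + 1)) + 1)) _ _ fun c => rfl).symm
  rw [e1, sum_zmod_range, Finset.sum_range_succ', hsplit]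
  simp only [Nat.cast_zero, zero_add, h0, add_zero]
  rw [two_mul (∑ i ∈ Finset.range m, h ((i : ZMod (2 * m + 1)) + 1))]
  congr 1
  · rw [← Finset.sum_range_reflect]
    refine Finset.sum_congr rfl fun k hk => ?_
    have hk' : k < m := by simpa using hk
    rw [← hs]
    congr 1
    obtain ⟨d, rfl⟩ := Nat.exists_eq_add_of_lt hk'
    have : k + d + 1 - 1 - k = d := by omega
    rw [this]
    push_cast at hz ⊢
    linear_combination -hz
  · refine Finset.sum_congr rfl fun k _ => ?_
    congr 1
    push_cast
    linear_combination hz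

theorem stmt_16 (m : ℕ) (hm : 0 < m) (r : ℕ) :
    fleck (4 * r + 1) (2 * m + 1) (2 * (r : ℤ) + 1) =
      -∑ j ∈ Finset.Icc 1 m, (fleck (2 * r + 1) (2 * m + 1) ((r : ℤ) + j)) ^ 2 := by
  have hz : (2 * (m : ZMod (2 * m + 1)) + 1) = 0 := by
    have := ZMod.natCast_self (2 * m + 1)
    push_cast at this; exact this
  set u : ZMod (2 * m + 1) → ℤ := fun c => zfleck (2 * m + 1) (2 * r + 1) (r + c) with hu
  have hsym : ∀ c, u (1 - c) = -u c := by
    intro c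
    have := zfleck_refl (2 * m + 1) (2 * r + 1) (r + c)
    rw [Odd.neg_one_pow ⟨r, rfl⟩, neg_one_mul] at this
    rw [hu]
    simp only
    rw [← this]
    congr 1
    push_cast; ring
  have h0 : u (m + 1) = 0 := by
    have := hsym (m + 1)
    have e : (1 - ((m : ZMod (2 * m + 1)) + 1)) = m + 1 := by linear_combination -hz
    rw [e] at this
    omega
  have hsum := sum_symm m (fun c => u c ^ 2) (fun c => by simp [hsym]) (by simp [h0])
  have hconv := zfleck_conv (2 * m + 1) (2 * r + 1) (2 * r + 1) (2 * r + 1)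
  have e2 : ∑ c : ZMod (2 * m + 1), u c ^ 2 = - zfleck (2 * m + 1) (4 * r + 2) (2 * r + 1) := by
    have e : 4 * r + 2 = (2 * r + 1) + (2 * r + 1) := by ring
    rw [e, ← hconv, ← Finset.sum_neg_distrib]
    refine Fintype.sum_equiv (Equiv.addLeft (r : ZMod (2 * m + 1))) _ _ fun c => ?_
    have h1 : (2 * (r : ZMod (2 * m + 1)) + 1 - (r + c)) = r + (1 - c) := by ring
    have h2 := hsym c
    simp only [hu] at h2 ⊢
    rw [Equiv.coe_addLeft, h1, h2]; ring
  have e3 := zfleck_succ (2 * m + 1) (4 * r + 1) (2 * r + 1)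
  have e4 := zfleck_refl (2 * m + 1) (4 * r + 1) (2 * r + 1)
  rw [Odd.neg_one_pow ⟨2 * r, by ring⟩, neg_one_mul] at e4
  have e5 : (((4 * r + 1 : ℕ) : ZMod (2 * m + 1)) - (2 * r + 1)) = 2 * r + 1 - 1 := by
    push_cast; ring
  rw [e5] at e4
  rw [e4] at e3
  have e6 : ∑ j ∈ Finset.Icc 1 m, (fleck (2 * r + 1) (2 * m + 1) ((r : ℤ) + j)) ^ 2
      = ∑ i ∈ Finset.range m, u ((i : ZMod (2 * m + 1)) + 1) ^ 2 := by
    rw [← Finset.Ico_add_one_right_eq_Icc, Finset.sum_Ico_eq_sum_range]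
    refine Finset.sum_congr (by simp) fun k _ => ?_
    rw [fleck_eq_zfleck]
    simp only [hu]
    congr 2
    push_cast; ring
  rw [e6, fleck_eq_zfleck]
  push_cast
  linarith
end

section
/- Let m be a positive integer, n = 2m+1, and r ≥ 0 an integer. Then 2·𝔉(4r+3, (2r+2) mod n) = 𝔉(4r+4, (2r+2) mod n) = ( 𝔉(2r+2, (r+1) mod n) )² + 2·Σ_{j=1}^{m} ( 𝔉(2r+2, (r+j+1) mod n) )². -/
open Finset

/-- Fleck numbers indexed by residue classes. -/
def fleckZ (N n : ℕ) (x : ZMod n) : ℤ :=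
  ∑ k ∈ Finset.range (N + 1),
    if (k : ZMod n) = x then (-1) ^ k * (Nat.choose N k : ℤ) else 0

theorem fleck_eq_fleckZ (N n : ℕ) (a : ℤ) : fleck N n a = fleckZ N n (a : ZMod n) := by
  unfold fleck fleckZ
  refine Finset.sum_congr rfl fun k _ => ?_
  have h : ((k : ℤ) ≡ a [ZMOD (n : ℤ)]) ↔ ((k : ZMod n) = (a : ZMod n)) := by
    rw [← ZMod.intCast_eq_intCast_iff]
    simp
  simp only [h]

theorem fleckZ_succ (N n : ℕ) (x : ZMod n) :
    fleckZ (N + 1) n x = fleckZ N n x - fleckZ N n (x - 1) := by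
  have h1 : fleckZ N n x = ∑ k ∈ Finset.range (N + 1 + 1),
      if (k : ZMod n) = x then (-1) ^ k * (Nat.choose N k : ℤ) else 0 := by
    rw [Finset.sum_range_succ]
    simp [fleckZ]
  rw [h1]
  unfold fleckZ
  rw [Finset.sum_range_succ', Finset.sum_range_succ' _ (N + 1), add_sub_right_comm,
    ← Finset.sum_sub_distrib]
  congr 1
  · refine Finset.sum_congr rfl fun k _ => ?_
    have h : ((k : ZMod n) = x - 1) ↔ (((k + 1 : ℕ) : ZMod n) = x) := by
      rw [eq_sub_iff_add_eq]; push_cast; rfl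
    simp only [h, Nat.choose_succ_succ]
    split_ifs
    · push_cast; ring
    · ring
  · simp

theorem fleckZ_symm (N n : ℕ) (x : ZMod n) :
    fleckZ N n ((N : ZMod n) - x) = (-1) ^ N * fleckZ N n x := by
  unfold fleckZ
  rw [← Finset.sum_range_reflect, Finset.mul_sum]
  refine Finset.sum_congr rfl fun k hk => ?_
  have hk' : k ≤ N := by simpa [Nat.lt_succ_iff] using hk
  have e : N + 1 - 1 - k = N - k := by omega
  rw [e, Nat.choose_symm hk', Nat.cast_sub hk']
  have h : ((N : ZMod n) - k = N - x) ↔ ((k : ZMod n) = x) := sub_right_inj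
  simp only [h]
  split_ifs
  · obtain ⟨d, rfl⟩ := Nat.exists_eq_add_of_le hk'
    have h2 : ((-1 : ℤ) ^ k) * (-1) ^ k = 1 := by rw [← mul_pow]; simp
    rw [Nat.add_sub_cancel_left, pow_add]
    linear_combination (-(-1 : ℤ) ^ d * ((k + d).choose k : ℤ)) * h2
  · simp

theorem fleckZ_add (n : ℕ) [NeZero n] (A B : ℕ) : ∀ c : ZMod n,
    fleckZ (A + B) n c = ∑ x : ZMod n, fleckZ A n x * fleckZ B n (c - x) := by
  induction A with
  | zero =>
    intro c
    have h : ∀ x : ZMod n, fleckZ 0 n x = if x = 0 then 1 else 0 := by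
      intro x; simp [fleckZ, eq_comm]
    simp [h]
  | succ A ih =>
    intro c
    rw [show A + 1 + B = A + B + 1 by ring, fleckZ_succ, ih, ih]
    simp only [fleckZ_succ A, sub_mul, Finset.sum_sub_distrib]
    congr 1
    rw [← Equiv.sum_comp (Equiv.addRight (1 : ZMod n))
      (fun x => fleckZ A n (x - 1) * fleckZ B n (c - x))]
    refine Finset.sum_congr rfl fun x _ => ?_
    simp only [Equiv.coe_addRight, add_sub_cancel_right]
    congr 2
    ring

theorem sum_zmod_odd (m : ℕ) (g : ZMod (2 * m + 1) → ℤ) (hg : ∀ x, g (-x) = g x) :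
    ∑ x, g x = g 0 + 2 * ∑ j ∈ Finset.Icc 1 m, g (j : ZMod (2 * m + 1)) := by
  have h0 : ∑ x, g x = ∑ i ∈ Finset.range (2 * m + 1), g (i : ZMod (2 * m + 1)) := by
    rw [Finset.sum_range]
    refine Finset.sum_congr rfl fun x _ => ?_
    congr 1
    exact (ZMod.natCast_zmod_val x).symm
  have h1 : ∑ j ∈ Finset.Icc 1 m, g (j : ZMod (2 * m + 1))
      = ∑ i ∈ Finset.range m, g ((i + 1 : ℕ) : ZMod (2 * m + 1)) := by
    rw [Finset.range_eq_Ico, Finset.sum_Ico_add' (fun j : ℕ => g (j : ZMod (2 * m + 1))) 0 m 1]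
    rfl
  rw [h0, h1, Finset.sum_range_succ']
  have h3 : ∀ f : ℕ → ℤ, ∑ k ∈ Finset.range (2 * m), f k
      = ∑ k ∈ Finset.range m, f k + ∑ k ∈ Finset.range m, f (m + k) := by
    intro f
    rw [two_mul, Finset.sum_range_add]
  rw [h3]
  rw [← Finset.sum_range_reflect (fun x => g ((m + x + 1 : ℕ) : ZMod (2 * m + 1)))]
  have h2 : ∀ i ∈ Finset.range m, g ((m + (m - 1 - i) + 1 : ℕ) : ZMod (2 * m + 1))
      = g ((i + 1 : ℕ) : ZMod (2 * m + 1)) := by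
    intro i hi
    rw [← hg]
    congr 1
    have hi' := Finset.mem_range.mp hi
    rw [neg_eq_iff_add_eq_zero, ← Nat.cast_add]
    rw [show m + (m - 1 - i) + 1 + (i + 1) = 2 * m + 1 by omega]
    exact ZMod.natCast_self _
  rw [Finset.sum_congr rfl h2]
  simp only [Nat.cast_zero]
  ring

theorem stmt_17 (m : ℕ) (hm : 0 < m) (r : ℕ) :
    2 * fleck (4 * r + 3) (2 * m + 1) (2 * (r : ℤ) + 2) =
        fleck (4 * r + 4) (2 * m + 1) (2 * (r : ℤ) + 2) ∧
    fleck (4 * r + 4) (2 * m + 1) (2 * (r : ℤ) + 2) =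
        (fleck (2 * r + 2) (2 * m + 1) ((r : ℤ) + 1)) ^ 2 +
          2 * ∑ j ∈ Finset.Icc 1 m, (fleck (2 * r + 2) (2 * m + 1) ((r : ℤ) + j + 1)) ^ 2 := by
  simp only [fleck_eq_fleckZ]
  push_cast
  constructor
  · rw [fleckZ_succ (4 * r + 3)]
    have h := fleckZ_symm (4 * r + 3) (2 * m + 1) (2 * (r : ZMod (2 * m + 1)) + 2)
    rw [Odd.neg_one_pow ⟨2 * r + 1, by ring⟩] at h
    have e : (((4 * r + 3 : ℕ) : ZMod (2 * m + 1)) - (2 * (r : ZMod (2 * m + 1)) + 2))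
        = 2 * (r : ZMod (2 * m + 1)) + 2 - 1 := by
      push_cast; ring
    rw [e] at h
    rw [h]; ring
  · have hs : ∀ x, fleckZ (2 * r + 2) (2 * m + 1) (2 * (r : ZMod (2 * m + 1)) + 2 - x)
        = fleckZ (2 * r + 2) (2 * m + 1) x := by
      intro x
      have h := fleckZ_symm (2 * r + 2) (2 * m + 1) x
      rw [Even.neg_one_pow ⟨r + 1, by ring⟩, one_mul] at h
      rw [← h]; push_cast; rfl
    rw [show 4 * r + 4 = (2 * r + 2) + (2 * r + 2) by ring, fleckZ_add]
    simp only [hs, ← pow_two]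
    rw [← Equiv.sum_comp (Equiv.addRight ((r : ZMod (2 * m + 1)) + 1))]
    rw [sum_zmod_odd]
    · simp only [Equiv.coe_addRight, zero_add]
      congr 2
      refine Finset.sum_congr rfl fun j _ => ?_
      congr 2
      ring
    · intro x
      simp only [Equiv.coe_addRight]
      rw [← hs]
      congr 2
      ring
end
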